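/- Let p ∈ (2,∞), let b : ℝ → ℝ be a bounded 2π-periodic function with mean B = (1/2π)∫₀^{2π} b(t) dt, and let ε = 1/(2k) for a positive integer k. Then for every function ω : [0,2π] → ℝ in the fractional Sobolev space W^{1−1/p,p}([0,2π]), |∫₀^{2π} ω(x)(B − b(x/ε)) dx| ≤ (2π)^{(2p−2)/p} · ‖b‖_∞ · ε^{(p−1)/p} · [ω]_{W^{1−1/p,p}}, where [ω]_{W^{1−1/p,p}} = (∫₀^{2π}∫₀^{2π} |ω(x)−ω(t)|^p / |x−t|^p dt dx)^{1/p} is the Gagliardo seminorm. -/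

import Mathlib

open MeasureTheory Real

/-- The pairs of points lying in a common cell `(n * h, (n + 1) * h]` of the grid of width `h`. -/
def sameCell (h : ℝ) : Set (ℝ × ℝ) := {z | ⌈z.1 / h⌉ = ⌈z.2 / h⌉}

lemma measurableSet_sameCell (h : ℝ) : MeasurableSet (sameCell h) :=
  measurableSet_eq_fun (Int.measurable_ceil.comp (measurable_fst.div_const h))
    (Int.measurable_ceil.comp (measurable_snd.div_const h))

lemma sameCell_comm {h x t : ℝ} : (x, t) ∈ sameCell h ↔ (t, x) ∈ sameCell h :=
  eq_comm

lemma abs_sub_le_of_mem_sameCell {h : ℝ} (hh : 0 < h) {z : ℝ × ℝ} (hz : z ∈ sameCell h) :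
    |z.1 - z.2| ≤ h := by
  have hz' : ⌈z.1 / h⌉ = ⌈z.2 / h⌉ := hz
  have h1 := Int.le_ceil (z.1 / h)
  have h2 := Int.ceil_lt_add_one (z.1 / h)
  have h3 := Int.le_ceil (z.2 / h)
  have h4 := Int.ceil_lt_add_one (z.2 / h)
  rw [hz'] at h1 h2
  have : |z.1 / h - z.2 / h| ≤ 1 := abs_le.2 ⟨by linarith, by linarith⟩
  rwa [← sub_div, abs_div, abs_of_pos hh, div_le_one hh] at this

lemma sameCell_section_inter {h : ℝ} (hh : 0 < h) (N : ℕ) {x : ℝ}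
    (hx : x ∈ Set.Ioc 0 (N * h)) :
    Set.Ioc 0 (N * h) ∩ {t | (x, t) ∈ sameCell h} =
      Set.Ioc ((⌈x / h⌉ - 1) * h) (⌈x / h⌉ * h) := by
  have h0 : (1 : ℝ) ≤ ⌈x / h⌉ := by
    exact_mod_cast Int.one_le_ceil_iff.2 (div_pos hx.1 hh)
  have h1 : (⌈x / h⌉ : ℝ) ≤ N := by
    have : ⌈x / h⌉ ≤ (N : ℤ) := Int.ceil_le.2 (by
      rw [div_le_iff₀ hh]; exact_mod_cast hx.2)
    exact_mod_cast this
  ext t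
  simp only [Set.mem_inter_iff, Set.mem_Ioc, Set.mem_ofPred_eq, sameCell]
  rw [eq_comm, Int.ceil_eq_iff, lt_div_iff₀ hh, div_le_iff₀ hh]
  constructor
  · exact fun ht => ht.2
  · refine fun ht => ⟨⟨?_, ?_⟩, ht⟩
    · exact lt_of_le_of_lt (mul_nonneg (by linarith) hh.le) ht.1
    · exact ht.2.trans (mul_le_mul_of_nonneg_right h1 hh.le)

/-- On every cell of the grid, the integral of a rescaled periodic function is the rescaled integral
over a period. -/
lemma integral_sameCell_section {b : ℝ → ℝ} {T : ℝ} (hT : 0 < T) (hper : Function.Periodic b T)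
    {N : ℕ} (hN : 0 < N) {x : ℝ} (hx : x ∈ Set.Ioc 0 T) :
    ∫ t in Set.Ioc 0 T, (sameCell (T / N)).indicator (fun z => b (N * z.2)) (x, t) =
      (N : ℝ)⁻¹ * ∫ t in Set.Ioc 0 T, b t := by
  have hN' : (0 : ℝ) < N := by exact_mod_cast hN
  have hh : 0 < T / N := div_pos hT hN'
  have hNT : N * (T / N) = T := by field_simp
  have hmeas : MeasurableSet {t | (x, t) ∈ sameCell (T / N)} :=
    measurable_prodMk_left (measurableSet_sameCell _)
  have hsec := sameCell_section_inter hh N (x := x) (by rwa [hNT])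
  rw [hNT] at hsec
  have hind : ∀ t, (sameCell (T / N)).indicator (fun z : ℝ × ℝ => b (N * z.2)) (x, t) =
      {t | (x, t) ∈ sameCell (T / N)}.indicator (fun t => b (N * t)) t := fun t => rfl
  simp only [hind]
  rw [setIntegral_indicator hmeas, hsec, ← intervalIntegral.integral_of_le
      (mul_le_mul_of_nonneg_right (by linarith) hh.le),
    ← intervalIntegral.integral_of_le hT.le,
    intervalIntegral.integral_comp_mul_left b hN'.ne', smul_eq_mul]
  congr 1
  have := hper.intervalIntegral_add_eq (N * ((⌈x / (T / N)⌉ - 1) * (T / N))) 0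
  rw [zero_add] at this
  rw [← this]
  congr 1
  field_simp
  ring

/-- Cell averaging turns the oscillating integral into a double integral of increments. -/
lemma integral_sameCell_increment {b ω : ℝ → ℝ} {T : ℝ} (hT : 0 < T) (hb : Measurable b)
    (hper : Function.Periodic b T) {M : ℝ} (hM : ∀ t, |b t| ≤ M) {N : ℕ} (hN : 0 < N)
    (hω : IntegrableOn ω (Set.Ioc 0 T)) :
    ∫ z, (sameCell (T / N)).indicator (fun z => (ω z.1 - ω z.2) * b (N * z.2)) z
        ∂(volume.restrict (Set.Ioc 0 T)).prod (volume.restrict (Set.Ioc 0 T)) =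
      T / N * ∫ x in Set.Ioc 0 T, ω x * (1 / T * (∫ t in Set.Ioc 0 T, b t) - b (N * x)) := by
  set μ := volume.restrict (Set.Ioc 0 T) with hμ
  set C := sameCell (T / N) with hC
  have hCm : MeasurableSet C := measurableSet_sameCell _
  have hbN : Measurable fun t : ℝ => b (N * t) := hb.comp (measurable_const_mul _)
  have hbi : Integrable (fun t : ℝ => b (N * t)) μ :=
    Integrable.of_bound hbN.aestronglyMeasurable M (ae_of_all _ fun t => hM _)
  have hωb : Integrable (fun t : ℝ => ω t * b (N * t)) μ :=
    hω.mul_bdd (c := M) hbN.aestronglyMeasurable (ae_of_all _ fun t => hM _)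
  have hF : Integrable (C.indicator fun z : ℝ × ℝ => ω z.1 * b (N * z.2)) (μ.prod μ) :=
    (Integrable.mul_prod hω hbi).indicator hCm
  have hG : Integrable (C.indicator fun z : ℝ × ℝ => ω z.2 * b (N * z.2)) (μ.prod μ) :=
    (hωb.comp_snd μ).indicator hCm
  have hsplit : (C.indicator fun z : ℝ × ℝ => (ω z.1 - ω z.2) * b (N * z.2)) =
      fun z => C.indicator (fun z : ℝ × ℝ => ω z.1 * b (N * z.2)) z -
        C.indicator (fun z : ℝ × ℝ => ω z.2 * b (N * z.2)) z := by
    rw [← Pi.sub_def, ← Set.indicator_sub']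
    congr 1
    ext z
    simp [sub_mul]
  rw [hsplit, integral_sub hF hG, integral_prod _ hF, integral_prod_symm _ hG,
    ← integral_const_mul]
  have h1 : ∫ x, ∫ t, C.indicator (fun z : ℝ × ℝ => ω z.1 * b (N * z.2)) (x, t) ∂μ ∂μ =
      ∫ x, ω x * ((N : ℝ)⁻¹ * ∫ t, b t ∂μ) ∂μ := by
    refine setIntegral_congr_fun measurableSet_Ioc fun x hx => ?_
    rw [← integral_sameCell_section hT hper hN hx, ← integral_const_mul]
    congr 1
    ext t
    by_cases ht : (x, t) ∈ C <;> simp [ht, ← hC]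
  have h2 : ∫ t, ∫ x, C.indicator (fun z : ℝ × ℝ => ω z.2 * b (N * z.2)) (x, t) ∂μ ∂μ =
      ∫ x, T / N * (ω x * b (N * x)) ∂μ := by
    refine setIntegral_congr_fun measurableSet_Ioc fun t ht => ?_
    have hone := integral_sameCell_section (b := fun _ => 1) hT (fun _ => rfl) hN ht
    have hvol : ∫ _ in Set.Ioc 0 T, (1 : ℝ) = T := by simp [hT.le]
    rw [hvol] at hone
    rw [div_eq_inv_mul, ← hone, mul_comm, ← integral_const_mul]
    congr 1
    ext x
    by_cases hx : (x, t) ∈ C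
    · have hx' : (t, x) ∈ C := sameCell_comm.1 hx
      simp [hx, hx', ← hC]
    · have hx' : (t, x) ∉ C := mt sameCell_comm.2 hx
      simp [hx, hx', ← hC]
  rw [h1, h2, ← integral_sub (hω.mul_const _) (hωb.const_mul _)]
  congr 1
  ext x
  field_simp

lemma integral_indicator_sameCell_one {T : ℝ} (hT : 0 < T) {N : ℕ} (hN : 0 < N) :
    ∫ z, (sameCell (T / N)).indicator (fun _ => (1 : ℝ)) z
        ∂(volume.restrict (Set.Ioc 0 T)).prod (volume.restrict (Set.Ioc 0 T)) = T * (T / N) := by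
  rw [integral_prod _ ((integrable_const _).indicator (measurableSet_sameCell _))]
  have hvol : ∫ _ in Set.Ioc 0 T, (1 : ℝ) = T := by simp [hT.le]
  have : ∫ x in Set.Ioc 0 T, ∫ t in Set.Ioc 0 T,
      (sameCell (T / N)).indicator (fun _ => (1 : ℝ)) (x, t) =
      ∫ _ in Set.Ioc 0 T, T / N := by
    refine setIntegral_congr_fun measurableSet_Ioc fun x hx => ?_
    have hone := integral_sameCell_section (b := fun _ => 1) hT (fun _ => rfl) hN hx
    rwa [hvol, ← div_eq_inv_mul] at hone
  rw [this]
  simp [hT.le]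

/-- Oscillation lemma with Gagliardo seminorm: for p > 2, b bounded 2π-periodic with
mean B, ε = 1/(2k), and ω with finite Gagliardo W^{1−1/p,p} seminorm on [0,2π],
|∫₀^{2π} ω(x)(B − b(x/ε)) dx| ≤ (2π)^{(2p−2)/p}·‖b‖_∞·ε^{(p−1)/p}·[ω]_{W^{1−1/p,p}}. -/
theorem stmt3 (p : ℝ) (hp : 2 < p) (b : ℝ → ℝ) (hb : Measurable b)
    (hper : Function.Periodic b (2 * π)) (Mb : ℝ) (hMb : ∀ t, |b t| ≤ Mb)
    (k : ℕ) (hk : 0 < k) (ω : ℝ → ℝ)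
    (hω : IntegrableOn ω (Set.Ioc 0 (2 * π)))
    (hG : IntegrableOn (fun z : ℝ × ℝ => |ω z.1 - ω z.2| ^ p / |z.1 - z.2| ^ p)
      (Set.Ioc 0 (2 * π) ×ˢ Set.Ioc 0 (2 * π))) :
    |∫ x in Set.Ioc (0 : ℝ) (2 * π),
        ω x * ((1 / (2 * π)) * (∫ t in Set.Ioc (0 : ℝ) (2 * π), b t) - b (2 * k * x))| ≤
      (2 * π) ^ ((2 * p - 2) / p) * Mb * ((1 : ℝ) / (2 * k)) ^ ((p - 1) / p) *
        (∫ x in Set.Ioc (0 : ℝ) (2 * π), ∫ t in Set.Ioc (0 : ℝ) (2 * π),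
          |ω x - ω t| ^ p / |x - t| ^ p) ^ (1 / p) := by
  have hT : 0 < 2 * π := by positivity
  have hN : 0 < 2 * k := by omega
  have hN' : (0 : ℝ) < (2 * k : ℕ) := by exact_mod_cast hN
  have hcast : (2 * k : ℝ) = (2 * k : ℕ) := by push_cast; rfl
  rw [hcast]
  generalize 2 * k = N at hN hN'
  generalize 2 * π = T at *
  set h := T / N with hh_def
  have hh : 0 < h := div_pos hT hN'
  have hM0 : 0 ≤ Mb := (abs_nonneg _).trans (hMb 0)
  have hp0 : 0 < p := by linarith
  have hpq : p.HolderConjugate (p / (p - 1)) := .conjExponent (by linarith)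
  have hkey := integral_sameCell_increment hT hb hper hMb hN hω
  have hmass := integral_indicator_sameCell_one hT hN
  set μ := volume.restrict (Set.Ioc 0 T) with hμ
  set J := ∫ x, ω x * (1 / T * (∫ t, b t ∂μ) - b (N * x)) ∂μ
  rw [← hh_def] at hkey hmass
  set C := sameCell h with hC
  have hCm : MeasurableSet C := measurableSet_sameCell _
  rw [IntegrableOn, Measure.volume_eq_prod, ← Measure.prod_restrict, ← hμ] at hG
  let D : ℝ × ℝ → ℝ := fun z => |ω z.1 - ω z.2| / |z.1 - z.2|
  have hD0 : ∀ z, 0 ≤ D z := fun z => by positivity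
  have hDp : ∀ z, D z ^ p = |ω z.1 - ω z.2| ^ p / |z.1 - z.2| ^ p := fun z =>
    div_rpow (abs_nonneg _) (abs_nonneg _) _
  have hDm : AEStronglyMeasurable D (μ.prod μ) := by
    have hωm : AEMeasurable ω μ := hω.aemeasurable
    have h1 : AEMeasurable (fun z : ℝ × ℝ => ω z.1) (μ.prod μ) := hωm.comp_fst
    have h2 : AEMeasurable (fun z : ℝ × ℝ => ω z.2) (μ.prod μ) := hωm.comp_snd
    have h3 : Measurable fun z : ℝ × ℝ => |z.1 - z.2| := by fun_prop
    exact ((measurable_norm.comp_aemeasurable (h1.sub h2)).div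
      h3.aemeasurable).aestronglyMeasurable
  have hDL : MemLp D (ENNReal.ofReal p) (μ.prod μ) := by
    rw [← integrable_norm_rpow_iff hDm (by simpa using hp0) ENNReal.ofReal_ne_top,
      ENNReal.toReal_ofReal hp0.le]
    refine hG.congr (ae_of_all _ fun z => ?_)
    dsimp only
    rw [Real.norm_of_nonneg (hD0 z), hDp]
  have hCL : ∀ r, MemLp (C.indicator fun _ => (1 : ℝ)) r (μ.prod μ) := fun r =>
    (memLp_const _).indicator hCm
  have hC0 : ∀ z, 0 ≤ C.indicator (fun _ => (1 : ℝ)) z := fun z =>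
    Set.indicator_nonneg (fun _ _ => zero_le_one) z
  have hholder := integral_mul_le_Lp_mul_Lq_of_nonneg hpq (ae_of_all (μ.prod μ) hD0)
    (ae_of_all _ hC0) hDL (hCL _)
  have hCq : ∀ z, C.indicator (fun _ => (1 : ℝ)) z ^ (p / (p - 1)) =
      C.indicator (fun _ => (1 : ℝ)) z := fun z => by
    by_cases hz : z ∈ C
    · simp [hz]
    · simp [hz, zero_rpow hpq.symm.ne_zero]
  simp only [hCq, hDp, hmass] at hholder
  rw [integral_prod _ hG] at hholder
  have hDi : Integrable D (μ.prod μ) :=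
    hDL.integrable (by rw [← ENNReal.ofReal_one]; exact ENNReal.ofReal_le_ofReal (by linarith))
  have hDC : Integrable (fun z => D z * C.indicator (fun _ => (1 : ℝ)) z) (μ.prod μ) := by
    refine (hDi.indicator hCm).congr (ae_of_all _ fun z => ?_)
    by_cases hz : z ∈ C <;> simp [hz]
  have hbound : |h * J| ≤ h * Mb * ∫ z, D z * C.indicator (fun _ => (1 : ℝ)) z ∂μ.prod μ := by
    rw [← hkey, ← integral_const_mul, ← Real.norm_eq_abs]
    refine norm_integral_le_of_norm_le (hDC.const_mul _) (ae_of_all _ fun z => ?_)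
    by_cases hz : z ∈ C
    · have hinc : |ω z.1 - ω z.2| ≤ h * D z := by
        rcases eq_or_ne z.1 z.2 with he | he
        · simp [he, D]
        · have hpos : 0 < |z.1 - z.2| := abs_pos.2 (sub_ne_zero.2 he)
          calc |ω z.1 - ω z.2| = |z.1 - z.2| * D z := (mul_div_cancel₀ _ hpos.ne').symm
            _ ≤ h * D z :=
              mul_le_mul_of_nonneg_right (abs_sub_le_of_mem_sameCell hh hz) (hD0 z)
      simp only [Set.indicator_of_mem hz, Real.norm_eq_abs, abs_mul, mul_one]
      calc |ω z.1 - ω z.2| * |b (N * z.2)| ≤ h * D z * Mb :=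
            mul_le_mul hinc (hMb _) (abs_nonneg _) (mul_nonneg hh.le (hD0 z))
        _ = h * Mb * D z := by ring
    · simp [hz]
  rw [abs_mul, abs_of_pos hh, mul_assoc] at hbound
  have hJ := (le_of_mul_le_mul_left hbound hh).trans (mul_le_mul_of_nonneg_left hholder hM0)
  refine hJ.trans_eq ?_
  have hexp : (T * h) ^ (1 / (p / (p - 1))) =
      T ^ ((2 * p - 2) / p) * (1 / (N : ℝ)) ^ ((p - 1) / p) := by
    rw [show T * h = T ^ (2 : ℝ) * (1 / (N : ℝ)) by rw [rpow_two, hh_def]; ring,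
      mul_rpow (by positivity) (by positivity), ← rpow_mul hT.le, one_div_div]
    congr 2
    ring
  rw [hexp]
  ring
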